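/- Let E be a measurable space, let μ_1, …, μ_n be probability measures on E, and for k = 2, …, n let T_k be a map from bounded measurable functions E → ℝ to bounded measurable functions E → ℝ such that for every bounded measurable f: (i) ∫ T_k f dμ_{k−1} = ∫ f dμ_k, and (ii) ∫ (T_k f)² dμ_{k−1} ≤ α ∫ f² dμ_k + β (∫ f dμ_k)², where 0 < α < 1 and β ≥ 1. Define q̂_{j,k} = T_{j+1} ∘ ⋯ ∘ T_k for 1 ≤ j < k ≤ n. Then for all 1 ≤ j < k ≤ n and every bounded measurable f: (∫ (q̂_{j,k} f)² dμ_j)^{1/2} ≤ (β/(1−α))^{1/2} (∫ f² dμ_k)^{1/2}. -/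

import Mathlib

open MeasureTheory

/-- A bounded measurable real-valued function. -/
def IsBddMeasurable {E : Type*} [MeasurableSpace E] (f : E → ℝ) : Prop :=
  Measurable f ∧ ∃ C : ℝ, ∀ x, |f x| ≤ C

/-- `qhat T j k = T (j+1) ∘ ⋯ ∘ T k` (the identity when `k ≤ j`). -/
def qhat {E : Type*} (T : ℕ → (E → ℝ) → (E → ℝ)) (j : ℕ) : ℕ → (E → ℝ) → (E → ℝ)
  | 0, f => f
  | k + 1, f => if j < k + 1 then qhat T j k (T (k + 1) f) else f

/-!
A mean-preserving operator obeying `∫ (T f)² ≤ a ∫ f² + b (∫ f)²` composes well with others of the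
same kind: the affine bounds compose, because the mean survives the inner operator. A composition
of `m` operators with constants `(α, β)` therefore has constants
`(α ^ m, β (1 + α + ⋯ + α ^ (m - 1)))`, and Jensen's inequality `(∫ f)² ≤ ∫ f²` bounds the second
moment by the sum of the two. That sum is at most `β / (1 - α)` as soon as `1 ≤ α + β`, which
testing a single operator on `f = 1` shows always to be the case.
-/

section BoundedMeasurable

variable {E : Type*} [MeasurableSpace E]

lemma isBddMeasurable_const (c : ℝ) : IsBddMeasurable fun _ : E => c :=
  ⟨measurable_const, |c|, fun _ => le_rfl⟩

lemma IsBddMeasurable.memLp {μ : Measure E} [IsFiniteMeasure μ] {f : E → ℝ}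
    (hf : IsBddMeasurable f) (p : ENNReal) : MemLp f p μ := by
  obtain ⟨hmeas, C, hC⟩ := hf
  exact .of_bound hmeas.aestronglyMeasurable C (.of_forall hC)

lemma sq_integral_le_integral_sq {μ : Measure E} [IsProbabilityMeasure μ] {f : E → ℝ}
    (hf : MemLp f 2 μ) : (∫ x, f x ∂μ) ^ 2 ≤ ∫ x, f x ^ 2 ∂μ :=
  sub_nonneg.mp <|
    (ProbabilityTheory.variance_nonneg f μ).trans_eq (ProbabilityTheory.variance_eq_sub hf)

end BoundedMeasurable

/-- An operator `T` from functions on `F` to functions on `E` that preserves bounded measurability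
and means, and whose second moments satisfy the `L²` bound with additive mean term. The one-step
transformations of Sequential Monte Carlo have constants `(a, b) = (α, β)`; leaving `a` and `b`
free makes the class closed under composition. -/
structure IsMeanSqBounded {E F : Type*} [MeasurableSpace E] [MeasurableSpace F]
    (μ : Measure E) (ν : Measure F) (a b : ℝ) (T : (F → ℝ) → (E → ℝ)) : Prop where
  isBddMeasurable : ∀ f, IsBddMeasurable f → IsBddMeasurable (T f)
  integral_eq : ∀ f, IsBddMeasurable f → ∫ x, T f x ∂μ = ∫ x, f x ∂ν
  integral_sq_le : ∀ f, IsBddMeasurable f →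
    ∫ x, T f x ^ 2 ∂μ ≤ a * ∫ x, f x ^ 2 ∂ν + b * (∫ x, f x ∂ν) ^ 2

namespace IsMeanSqBounded

variable {E F G : Type*} [MeasurableSpace E] [MeasurableSpace F] [MeasurableSpace G]
  {μ : Measure E} {ν : Measure F} {ρ : Measure G} {a b c d : ℝ}
  {S : (F → ℝ) → (E → ℝ)} {T : (G → ℝ) → (F → ℝ)}

protected lemma id : IsMeanSqBounded μ μ 1 0 id where
  isBddMeasurable _ hf := hf
  integral_eq _ _ := rfl
  integral_sq_le f _ := by simp

lemma comp (hS : IsMeanSqBounded μ ν a b S) (hT : IsMeanSqBounded ν ρ c d T) (ha : 0 ≤ a) :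
    IsMeanSqBounded μ ρ (a * c) (a * d + b) (S ∘ T) where
  isBddMeasurable f hf := hS.isBddMeasurable _ (hT.isBddMeasurable f hf)
  integral_eq f hf :=
    (hS.integral_eq _ (hT.isBddMeasurable f hf)).trans (hT.integral_eq f hf)
  integral_sq_le f hf := calc
    ∫ x, S (T f) x ^ 2 ∂μ
      ≤ a * ∫ x, T f x ^ 2 ∂ν + b * (∫ x, T f x ∂ν) ^ 2 :=
        hS.integral_sq_le _ (hT.isBddMeasurable f hf)
    _ = a * ∫ x, T f x ^ 2 ∂ν + b * (∫ x, f x ∂ρ) ^ 2 := by rw [hT.integral_eq f hf]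
    _ ≤ a * (c * ∫ x, f x ^ 2 ∂ρ + d * (∫ x, f x ∂ρ) ^ 2) + b * (∫ x, f x ∂ρ) ^ 2 := by
        gcongr
        exact hT.integral_sq_le f hf
    _ = a * c * ∫ x, f x ^ 2 ∂ρ + (a * d + b) * (∫ x, f x ∂ρ) ^ 2 := by ring

lemma one_le_add [IsProbabilityMeasure μ] [IsProbabilityMeasure ν]
    (hS : IsMeanSqBounded μ ν a b S) : 1 ≤ a + b := by
  have hone : IsBddMeasurable fun _ : F => (1 : ℝ) := isBddMeasurable_const 1
  calc
    1 = (∫ x, S (fun _ => 1) x ∂μ) ^ 2 := by simp [hS.integral_eq _ hone]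
    _ ≤ ∫ x, S (fun _ => 1) x ^ 2 ∂μ :=
        sq_integral_le_integral_sq ((hS.isBddMeasurable _ hone).memLp 2)
    _ ≤ a + b := by simpa using hS.integral_sq_le _ hone

lemma integral_sq_le_add_mul [IsProbabilityMeasure ν] (hS : IsMeanSqBounded μ ν a b S)
    (hb : 0 ≤ b) {f : F → ℝ} (hf : IsBddMeasurable f) :
    ∫ x, S f x ^ 2 ∂μ ≤ (a + b) * ∫ x, f x ^ 2 ∂ν := calc
  ∫ x, S f x ^ 2 ∂μ
    ≤ a * ∫ x, f x ^ 2 ∂ν + b * (∫ x, f x ∂ν) ^ 2 := hS.integral_sq_le f hf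
  _ ≤ a * ∫ x, f x ^ 2 ∂ν + b * ∫ x, f x ^ 2 ∂ν := by
      gcongr
      exact sq_integral_le_integral_sq (hf.memLp 2)
  _ = (a + b) * ∫ x, f x ^ 2 ∂ν := (add_mul _ _ _).symm

end IsMeanSqBounded

section Qhat

variable {E : Type*}

lemma qhat_self (T : ℕ → (E → ℝ) → (E → ℝ)) (j : ℕ) : qhat T j j = id := by
  funext f
  cases j <;> simp [qhat]

lemma qhat_succ (T : ℕ → (E → ℝ) → (E → ℝ)) {j k : ℕ} (hjk : j ≤ k) :
    qhat T j (k + 1) = qhat T j k ∘ T (k + 1) := by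
  funext f
  rw [qhat, if_pos (Nat.lt_succ_of_le hjk), Function.comp_apply]

lemma isMeanSqBounded_qhat [MeasurableSpace E] {μ : ℕ → Measure E}
    {T : ℕ → (E → ℝ) → (E → ℝ)} {α β : ℝ} (hα : 0 ≤ α) (j m : ℕ)
    (hT : ∀ i, j ≤ i → i < j + m → IsMeanSqBounded (μ i) (μ (i + 1)) α β (T (i + 1))) :
    IsMeanSqBounded (μ j) (μ (j + m)) (α ^ m) (β * ∑ i ∈ Finset.range m, α ^ i)
      (qhat T j (j + m)) := by
  induction m with
  | zero => simpa [qhat_self] using IsMeanSqBounded.id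
  | succ m ih =>
    have hinit := ih fun i hji him => hT i hji (by omega)
    have hlast := hT (j + m) (by omega) (by omega)
    have hcoeff : β * ∑ i ∈ Finset.range (m + 1), α ^ i =
        α ^ m * β + β * ∑ i ∈ Finset.range m, α ^ i := by
      rw [Finset.sum_range_succ]
      ring
    rw [← add_assoc, qhat_succ T (Nat.le_add_right j m), pow_succ, hcoeff]
    exact hinit.comp hlast (pow_nonneg hα m)

end Qhat

lemma pow_add_mul_geom_sum_le {K : Type*} [Field K] [LinearOrder K] [IsStrictOrderedRing K]
    {α β : K} (hα0 : 0 ≤ α) (hα1 : α < 1) (hαβ : 1 ≤ α + β) (m : ℕ) :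
    α ^ m + β * ∑ i ∈ Finset.range m, α ^ i ≤ β / (1 - α) := by
  rw [le_div_iff₀ (sub_pos.mpr hα1)]
  calc
    (α ^ m + β * ∑ i ∈ Finset.range m, α ^ i) * (1 - α)
      = α ^ m * (1 - α) + β * (1 - α ^ m) := by rw [← geom_sum_mul_neg]; ring
    _ ≤ α ^ m * β + β * (1 - α ^ m) := by
        gcongr
        exact sub_le_iff_le_add'.mpr hαβ
    _ = β := by ring

theorem stmt_0_general {E : Type*} [MeasurableSpace E] {n : ℕ} {μ : ℕ → Measure E}
    (hprob : ∀ k, 1 ≤ k → k ≤ n → IsProbabilityMeasure (μ k))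
    {T : ℕ → (E → ℝ) → (E → ℝ)} {α β : ℝ} (hα0 : 0 ≤ α) (hα1 : α < 1)
    (hT : ∀ i, 1 ≤ i → i < n → IsMeanSqBounded (μ i) (μ (i + 1)) α β (T (i + 1)))
    {j k : ℕ} (hj : 1 ≤ j) (hjk : j < k) (hk : k ≤ n) {f : E → ℝ} (hf : IsBddMeasurable f) :
    (∫ x, (qhat T j k f x) ^ 2 ∂(μ j)) ^ ((1 : ℝ) / 2) ≤
      (β / (1 - α)) ^ ((1 : ℝ) / 2) * (∫ x, (f x) ^ 2 ∂(μ k)) ^ ((1 : ℝ) / 2) := by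
  obtain ⟨m, rfl⟩ := Nat.exists_eq_add_of_le hjk.le
  have := hprob j hj (by omega)
  have := hprob (j + 1) (by omega) (by omega)
  have := hprob (j + m) (by omega) hk
  have hαβ : 1 ≤ α + β := (hT j hj (by omega)).one_le_add
  have hβ : 0 ≤ β := by linarith
  have hq := isMeanSqBounded_qhat hα0 j m fun i hji him => hT i (by omega) (by omega)
  have hf_sq : 0 ≤ ∫ x, f x ^ 2 ∂(μ (j + m)) := integral_nonneg fun x => sq_nonneg (f x)
  rw [← Real.mul_rpow (div_nonneg hβ (sub_nonneg.mpr hα1.le)) hf_sq]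
  refine Real.rpow_le_rpow (integral_nonneg fun x => sq_nonneg _) ?_ (by norm_num)
  calc
    ∫ x, qhat T j (j + m) f x ^ 2 ∂(μ j)
      ≤ (α ^ m + β * ∑ i ∈ Finset.range m, α ^ i) * ∫ x, f x ^ 2 ∂(μ (j + m)) :=
        hq.integral_sq_le_add_mul (by positivity) hf
    _ ≤ β / (1 - α) * ∫ x, f x ^ 2 ∂(μ (j + m)) := by
        gcongr
        exact pow_add_mul_geom_sum_le hα0 hα1 hαβ m

theorem stmt_0 {E : Type*} [MeasurableSpace E] (n : ℕ)
    (μ : ℕ → Measure E) (hprob : ∀ k, 1 ≤ k → k ≤ n → IsProbabilityMeasure (μ k))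
    (T : ℕ → (E → ℝ) → (E → ℝ)) (α β : ℝ)
    (hα0 : 0 < α) (hα1 : α < 1) (hβ : 1 ≤ β)
    (hTbdd : ∀ k, 2 ≤ k → k ≤ n → ∀ f, IsBddMeasurable f → IsBddMeasurable (T k f))
    (hmean : ∀ k, 2 ≤ k → k ≤ n → ∀ f, IsBddMeasurable f →
      ∫ x, T k f x ∂(μ (k - 1)) = ∫ x, f x ∂(μ k))
    (hstep : ∀ k, 2 ≤ k → k ≤ n → ∀ f, IsBddMeasurable f →
      ∫ x, (T k f x) ^ 2 ∂(μ (k - 1)) ≤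
        α * ∫ x, (f x) ^ 2 ∂(μ k) + β * (∫ x, f x ∂(μ k)) ^ 2) :
    ∀ j k, 1 ≤ j → j < k → k ≤ n → ∀ f, IsBddMeasurable f →
      (∫ x, (qhat T j k f x) ^ 2 ∂(μ j)) ^ ((1 : ℝ) / 2) ≤
        (β / (1 - α)) ^ ((1 : ℝ) / 2) * (∫ x, (f x) ^ 2 ∂(μ k)) ^ ((1 : ℝ) / 2) :=
  fun _ _ hj hjk hk _ hf => stmt_0_general hprob hα0.le hα1 (fun i hi hin =>
    ⟨hTbdd (i + 1) (by omega) hin, hmean (i + 1) (by omega) hin, hstep (i + 1) (by omega) hin⟩)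
    hj hjk hk hf
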